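/- (Caccioppoli inequality for the heat equation.) There is a constant c(n) > 0 with the following property. Let a < s ≤ t < b be real numbers, let u be a smooth function on (a,b) × ℝⁿ solving the heat equation ∂ₜu = Δu, and let x₀ ∈ ℝⁿ, 0 < r < ρ. Then ∫ₛᵗ ∫_{B(x₀,r)} |∇u(τ,x)|² dτ dx ≤ c(n) · ( 1/(ρ−r)² + 1/(s−a) ) · ∫ₐᵇ ∫_{B(x₀,ρ)} |u(τ,x)|² dτ dx, whenever the right-hand side is finite. -/

import Mathlib

open MeasureTheory Metric Filter Set
open scoped Real ENNReal Topology

noncomputable section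

abbrev ES (n : ℕ) := EuclideanSpace ℝ (Fin n)

/-- The Laplacian of `f`, as the sum of its second partial derivatives. -/
def heatLap (n : ℕ) (f : ES n → ℝ) (x : ES n) : ℝ :=
  ∑ i : Fin n,
    fderiv ℝ (fun y => fderiv ℝ f y (EuclideanSpace.single i 1)) x (EuclideanSpace.single i 1)

lemma hc_norm_grad (n : ℕ) (f : ES n → ℝ) (x : ES n) : ‖gradient f x‖ = ‖fderiv ℝ f x‖ := by
  simp [gradient]

lemma hc_norm_sq (n : ℕ) (L : ES n →L[ℝ] ℝ) :
    ‖L‖ ^ 2 = ∑ i : Fin n, (L (EuclideanSpace.single i 1)) ^ 2 := by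
  obtain ⟨g, rfl⟩ := (InnerProductSpace.toDual ℝ (ES n)).surjective L
  rw [LinearIsometryEquiv.norm_map, EuclideanSpace.real_norm_sq_eq]
  refine Finset.sum_congr rfl fun i _ => ?_
  rw [InnerProductSpace.toDual_apply_apply, EuclideanSpace.inner_single_right]
  simp

/-- bound on derivative of the smooth transition -/
lemma hc_trans : ∃ C : ℝ, 0 ≤ C ∧ (∀ y, |deriv Real.smoothTransition y| ≤ C) ∧
    ∀ y, y ≤ 0 → deriv Real.smoothTransition y = 0 := by
  have h0 : ∀ y, y ≤ 0 → deriv Real.smoothTransition y = 0 := by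
    intro y hy
    apply IsLocalMin.deriv_eq_zero
    refine Filter.Eventually.of_forall fun z => ?_
    rw [Real.smoothTransition.zero_of_nonpos hy]
    exact Real.smoothTransition.nonneg z
  have h1 : ∀ y, 1 ≤ y → deriv Real.smoothTransition y = 0 := by
    intro y hy
    apply IsLocalMax.deriv_eq_zero
    refine Filter.Eventually.of_forall fun z => ?_
    rw [Real.smoothTransition.one_of_one_le hy]
    exact Real.smoothTransition.le_one z
  have hc : Continuous (deriv Real.smoothTransition) :=
    (Real.smoothTransition.contDiff (n := 1)).continuous_deriv le_rfl
  obtain ⟨C, hC⟩ := (isCompact_Icc (a := (0:ℝ)) (b := 1)).exists_bound_of_continuousOn hc.continuousOn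
  refine ⟨max C 0, le_max_right _ _, fun y => ?_, h0⟩
  rcases le_total y 0 with h | h
  · rw [h0 y h]; simp
  rcases le_total 1 y with h' | h'
  · rw [h1 y h']; simp
  · exact (hC y ⟨h, h'⟩).trans (le_max_left _ _)

lemma hc_cutoff (n : ℕ) : ∃ C : ℝ, 0 ≤ C ∧ ∀ (x₀ : ES n) (r ρ : ℝ), 0 < r → r < ρ →
    ∃ φ : ES n → ℝ, ContDiff ℝ 2 φ ∧ (∀ x, 0 ≤ φ x) ∧ (∀ x, φ x ≤ 1) ∧
      (∀ x ∈ ball x₀ r, φ x = 1) ∧ (∀ x, x ∉ ball x₀ ρ → φ x = 0) ∧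
      (∀ x, x ∉ ball x₀ ρ → fderiv ℝ φ x = 0) ∧
      ∀ x, ‖fderiv ℝ φ x‖ ^ 2 ≤ C / (ρ - r) ^ 2 := by
  obtain ⟨C, hC0, hC, hz⟩ := hc_trans
  refine ⟨4 * C ^ 2, by positivity, fun x₀ r ρ hr hρ => ?_⟩
  have hd : 0 < ρ ^ 2 - r ^ 2 := by nlinarith
  have hq : ContDiff ℝ 2 (fun x : ES n => (ρ ^ 2 - ‖x - x₀‖ ^ 2) / (ρ ^ 2 - r ^ 2)) := by
    have : ContDiff ℝ 2 (fun x : ES n => ‖x - x₀‖ ^ 2) :=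
      (contDiff_id.sub contDiff_const).norm_sq ℝ
    exact (contDiff_const.sub this).div_const _
  have hfd : ∀ x : ES n, HasFDerivAt
      (fun x : ES n => Real.smoothTransition ((ρ ^ 2 - ‖x - x₀‖ ^ 2) / (ρ ^ 2 - r ^ 2)))
      ((deriv Real.smoothTransition ((ρ ^ 2 - ‖x - x₀‖ ^ 2) / (ρ ^ 2 - r ^ 2))) •
        ((ρ ^ 2 - r ^ 2)⁻¹ • (-((2:ℝ) • (innerSL ℝ (x - x₀))) : ES n →L[ℝ] ℝ))) x := by
    intro x
    have h1 : HasFDerivAt (fun x : ES n => ‖x - x₀‖ ^ 2) ((2:ℝ) • (innerSL ℝ (x - x₀))) x := by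
      have := ((hasFDerivAt_id x).sub_const x₀).norm_sq
      simpa [two_smul] using this
    have h2 : HasFDerivAt (fun x : ES n => (ρ ^ 2 - ‖x - x₀‖ ^ 2) / (ρ ^ 2 - r ^ 2))
        ((ρ ^ 2 - r ^ 2)⁻¹ • (-((2:ℝ) • (innerSL ℝ (x - x₀))) : ES n →L[ℝ] ℝ)) x := by
      have := (h1.const_sub (ρ ^ 2)).const_mul ((ρ ^ 2 - r ^ 2)⁻¹)
      refine this.congr_of_eventuallyEq (Filter.Eventually.of_forall fun y => ?_)
      simp only [div_eq_inv_mul]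
    have h3 : HasDerivAt Real.smoothTransition _ ((ρ ^ 2 - ‖x - x₀‖ ^ 2) / (ρ ^ 2 - r ^ 2)) :=
      ((Real.smoothTransition.contDiff (n := 1)).differentiable (by simp) _).hasDerivAt
    exact h3.comp_hasFDerivAt x h2
  have hout : ∀ x : ES n, x ∉ ball x₀ ρ → (ρ ^ 2 - ‖x - x₀‖ ^ 2) / (ρ ^ 2 - r ^ 2) ≤ 0 := by
    intro x hx
    rw [mem_ball, dist_eq_norm, not_lt] at hx
    apply div_nonpos_of_nonpos_of_nonneg _ hd.le
    nlinarith
  have hz' : ∀ x : ES n, x ∉ ball x₀ ρ → fderiv ℝ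
      (fun x : ES n => Real.smoothTransition ((ρ ^ 2 - ‖x - x₀‖ ^ 2) / (ρ ^ 2 - r ^ 2))) x = 0 := by
    intro x hx
    rw [(hfd x).fderiv, hz _ (hout x hx), zero_smul]
  refine ⟨fun x => Real.smoothTransition ((ρ ^ 2 - ‖x - x₀‖ ^ 2) / (ρ ^ 2 - r ^ 2)),
    (Real.smoothTransition.contDiff (n := 2)).comp hq, fun x => Real.smoothTransition.nonneg _,
    fun x => Real.smoothTransition.le_one _, ?_, ?_, hz', ?_⟩
  · intro x hx
    apply Real.smoothTransition.one_of_one_le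
    rw [mem_ball, dist_eq_norm] at hx
    rw [le_div_iff₀ hd]
    nlinarith [norm_nonneg (x - x₀)]
  · intro x hx
    exact Real.smoothTransition.zero_of_nonpos (hout x hx)
  · intro x
    have hpos : 0 < ρ - r := by linarith
    by_cases hx : x ∈ ball x₀ ρ
    · rw [mem_ball, dist_eq_norm] at hx
      rw [(hfd x).fderiv, norm_smul, norm_smul, norm_neg, norm_smul,
        innerSL_apply_norm, Real.norm_eq_abs, Real.norm_eq_abs, Real.norm_eq_abs,
        abs_of_pos (inv_pos.2 hd), abs_of_pos (by norm_num : (0:ℝ) < 2)]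
      have hb : (ρ ^ 2 - r ^ 2)⁻¹ * (2 * ‖x - x₀‖) ≤ 2 / (ρ - r) := by
        rw [inv_mul_le_iff₀ hd, show (ρ ^ 2 - r ^ 2) * (2 / (ρ - r)) = 2 * (ρ + r) by
          field_simp; ring]
        linarith
      have h4 := hC ((ρ ^ 2 - ‖x - x₀‖ ^ 2) / (ρ ^ 2 - r ^ 2))
      calc _ ≤ (C * (2 / (ρ - r))) ^ 2 := by gcongr
        _ = _ := by field_simp; ring
    · rw [hz' x hx]; simp; positivity

lemma hc_int {n : ℕ} {x₀ : ES n} {ρ : ℝ} {h : ES n → ℝ} (hc : Continuous h)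
    (hz : ∀ x, x ∉ ball x₀ ρ → h x = 0) : Integrable h := by
  apply hc.integrable_of_hasCompactSupport
  apply HasCompactSupport.intro (isCompact_closedBall x₀ ρ)
  intro x hx
  exact hz x fun h => hx (ball_subset_closedBall h)

lemma hc_space (n : ℕ) (f φ : ES n → ℝ) (hf : ContDiff ℝ 2 f) (hφ : ContDiff ℝ 2 φ)
    (x₀ : ES n) (ρ : ℝ) (hz : ∀ x, x ∉ ball x₀ ρ → φ x = 0)
    (hz' : ∀ x, x ∉ ball x₀ ρ → fderiv ℝ φ x = 0) :
    ∫ x, φ x ^ 2 * ‖fderiv ℝ f x‖ ^ 2 ≤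
      - (∫ x, φ x ^ 2 * (2 * f x * heatLap n f x)) + 4 * ∫ x, ‖fderiv ℝ φ x‖ ^ 2 * f x ^ 2 := by
  have cf : Continuous f := hf.continuous
  have cφ : Continuous φ := hφ.continuous
  have d1 : ContDiff ℝ 1 (fderiv ℝ f) := hf.fderiv_right (by norm_num)
  have e1 : ContDiff ℝ 1 (fderiv ℝ φ) := hφ.fderiv_right (by norm_num)
  have df : Differentiable ℝ f := hf.differentiable (by norm_num)
  have dφ : Differentiable ℝ φ := hφ.differentiable (by norm_num)
  have d2 : ∀ v : ES n, ContDiff ℝ 1 (fun y => fderiv ℝ f y v) := fun v => d1.clm_apply contDiff_const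
  have cd1 := d1.continuous
  have ce1 := e1.continuous
  have d3 : ∀ v w : ES n, Continuous (fun y => fderiv ℝ (fun y => fderiv ℝ f y v) y w) := fun v w =>
    ((d2 v).continuous_fderiv (by norm_num)).clm_apply continuous_const
  have key : ∀ v : ES n, ∫ x, φ x ^ 2 * (fderiv ℝ f x v) ^ 2 ≤
      - (∫ x, φ x ^ 2 * (2 * f x * fderiv ℝ (fun y => fderiv ℝ f y v) x v)) +
        4 * ∫ x, (fderiv ℝ φ x v) ^ 2 * f x ^ 2 := by
    intro v
    have hfd : ∀ x, fderiv ℝ (fun x => φ x ^ 2 * f x) x v =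
        2 * φ x * f x * fderiv ℝ φ x v + φ x ^ 2 * fderiv ℝ f x v := by
      intro x
      have h := (((dφ x).hasFDerivAt.pow 2).mul (df x).hasFDerivAt).fderiv
      have h' : fderiv ℝ (fun x => φ x ^ 2 * f x) x = _ := h
      rw [h']
      simp
      ring
    have ibp := integral_mul_fderiv_eq_neg_fderiv_mul_of_integrable (μ := (volume : Measure (ES n)))
      (f := fun x => φ x ^ 2 * f x) (g := fun x => fderiv ℝ f x v) (v := v)
      (by
        simp only [hfd]
        refine hc_int (x₀ := x₀) (ρ := ρ) (by fun_prop) ?_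
        intro x hx; rw [hz x hx]; ring)
      (by
        have := d3 v v
        refine hc_int (x₀ := x₀) (ρ := ρ) (by fun_prop) ?_
        intro x hx; rw [hz x hx]; ring)
      (by
        refine hc_int (x₀ := x₀) (ρ := ρ) (by fun_prop) ?_
        intro x hx; rw [hz x hx]; ring)
      (fun x _ => by fun_prop)
      (fun x _ => (d2 v).differentiable (by norm_num) x)
    have e : ∫ x, φ x ^ 2 * (2 * f x * fderiv ℝ (fun y => fderiv ℝ f y v) x v) =
        - (2 * ∫ x, (2 * φ x * f x * fderiv ℝ φ x v + φ x ^ 2 * fderiv ℝ f x v) * fderiv ℝ f x v) := by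
      simp only [hfd] at ibp
      rw [← mul_neg, ← ibp, ← integral_const_mul]
      congr 1; ext x; ring
    rw [e, neg_neg, ← integral_const_mul, ← integral_const_mul, ← integral_add]
    · apply integral_mono
      · refine hc_int (x₀ := x₀) (ρ := ρ) (by fun_prop) ?_
        intro x hx; rw [hz x hx]; ring
      · refine hc_int (x₀ := x₀) (ρ := ρ) (by fun_prop) ?_
        intro x hx; simp [hz x hx, hz' x hx]
      · intro x
        simp only
        nlinarith [sq_nonneg (φ x * fderiv ℝ f x v + 2 * f x * fderiv ℝ φ x v)]
    · refine hc_int (x₀ := x₀) (ρ := ρ) (by fun_prop) ?_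
      intro x hx; simp [hz x hx]
    · refine hc_int (x₀ := x₀) (ρ := ρ) (by fun_prop) ?_
      intro x hx; simp [hz' x hx]
  have := Finset.sum_le_sum (s := Finset.univ) fun (i : Fin n) _ => key (EuclideanSpace.single i 1)
  rw [Finset.sum_add_distrib, Finset.sum_neg_distrib, ← Finset.mul_sum,
    ← integral_finsetSum, ← integral_finsetSum, ← integral_finsetSum] at this
  · simpa only [hc_norm_sq, heatLap, Finset.mul_sum, Finset.sum_mul] using this
  · intro i _
    refine hc_int (x₀ := x₀) (ρ := ρ) (by fun_prop) ?_
    intro x hx; simp [hz' x hx]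
  · intro i _
    have := d3 (EuclideanSpace.single i 1) (EuclideanSpace.single i 1)
    refine hc_int (x₀ := x₀) (ρ := ρ) (by fun_prop) ?_
    intro x hx; simp [hz x hx]
  · intro i _
    refine hc_int (x₀ := x₀) (ρ := ρ) (by fun_prop) ?_
    intro x hx; simp [hz x hx]

lemma hc_prodint {n : ℕ} {a b σ t : ℝ} (hσ : a < σ) (ht : t < b) {x₀ : ES n} {ρ : ℝ}
    {H : ℝ × ES n → ℝ} (hc : ContinuousOn H (Ioo a b ×ˢ univ))
    (hz : ∀ τ x, x ∉ ball x₀ ρ → H (τ, x) = 0) :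
    Integrable H ((volume.restrict (Ioc σ t)).prod volume) := by
  have h1 : IntegrableOn H (Icc σ t ×ˢ closedBall x₀ ρ) := by
    apply ContinuousOn.integrableOn_compact (isCompact_Icc.prod (isCompact_closedBall _ _))
    exact hc.mono (prod_mono (Icc_subset_Ioo hσ ht) (subset_univ _))
  have h2 : IntegrableOn H (Ioc σ t ×ˢ closedBall x₀ ρ) :=
    h1.mono_set (prod_mono Ioc_subset_Icc_self subset_rfl)
  have h3 : IntegrableOn H (Ioc σ t ×ˢ univ) := by
    refine h2.of_forall_sdiff_eq_zero (measurableSet_Ioc.prod MeasurableSet.univ) ?_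
    rintro ⟨τ, x⟩ ⟨⟨hτ, -⟩, hx⟩
    apply hz
    intro h
    exact hx ⟨hτ, ball_subset_closedBall h⟩
  rw [IntegrableOn, Measure.volume_eq_prod, ← Measure.prod_restrict, Measure.restrict_univ] at h3
  exact h3

lemma hc_energy (n : ℕ) (a b σ t : ℝ) (u : ℝ → ES n → ℝ) (hσ : a < σ) (hst : σ ≤ t) (ht : t < b)
    (hU : ContDiffOn ℝ (⊤ : ℕ∞) (fun p : ℝ × ES n => u p.1 p.2) (Set.Ioo a b ×ˢ Set.univ))
    (heq : ∀ (τ : ℝ) (x : ES n), τ ∈ Set.Ioo a b →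
          HasDerivAt (fun σ => u σ x) (heatLap n (u τ) x) τ)
    (x₀ : ES n) (r ρ M : ℝ) (hr : r < ρ) (hM : 0 ≤ M)
    (φ : ES n → ℝ) (hφ : ContDiff ℝ 2 φ) (h0 : ∀ x, 0 ≤ φ x) (h1 : ∀ x, φ x ≤ 1)
    (hone : ∀ x ∈ ball x₀ r, φ x = 1) (hz : ∀ x, x ∉ ball x₀ ρ → φ x = 0)
    (hz' : ∀ x, x ∉ ball x₀ ρ → fderiv ℝ φ x = 0)
    (hφM : ∀ x, ‖fderiv ℝ φ x‖ ^ 2 ≤ M) (s : ℝ) (hs : σ ≤ s)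
    (hF : IntegrableOn (fun τ => ∫ x in ball x₀ ρ, (u τ x) ^ 2) (Ioo a b)) :
    (∫ τ in Set.Ioo s t, ∫ x in Metric.ball x₀ r, ‖gradient (u τ) x‖ ^ 2) ≤
      (∫ x in ball x₀ ρ, (u σ x) ^ 2) + 4 * M * ∫ τ in Ioo a b, ∫ x in ball x₀ ρ, (u τ x) ^ 2 := by
  set U : ℝ × ES n → ℝ := fun p => u p.1 p.2 with hUdef
  have hO : IsOpen (Ioo a b ×ˢ (univ : Set (ES n))) := isOpen_Ioo.prod isOpen_univ
  have hUd : ∀ τ ∈ Ioo a b, ∀ x, HasFDerivAt U (fderiv ℝ U (τ, x)) (τ, x) := fun τ hτ x =>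
    ((hU.differentiableOn (by simp)).differentiableAt (hO.mem_nhds ⟨hτ, mem_univ _⟩)).hasFDerivAt
  have hslice : ∀ τ ∈ Ioo a b, ContDiff ℝ 2 (u τ) := by
    intro τ hτ
    rw [← contDiffOn_univ]
    have : ContDiffOn ℝ 2 U (Ioo a b ×ˢ univ) := hU.of_le (WithTop.coe_le_coe.2 le_top)
    exact this.comp (contDiff_prodMk_right τ).contDiffOn (fun x _ => ⟨hτ, mem_univ _⟩)
  have hgrad : ∀ τ ∈ Ioo a b, ∀ x, fderiv ℝ (u τ) x =
      (fderiv ℝ U (τ, x)).comp (ContinuousLinearMap.inr ℝ ℝ (ES n)) := by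
    intro τ hτ x
    exact ((hUd τ hτ x).comp x (hasFDerivAt_prodMk_right τ x)).fderiv
  have hlap : ∀ τ ∈ Ioo a b, ∀ x, heatLap n (u τ) x = fderiv ℝ U (τ, x) (1, 0) := by
    intro τ hτ x
    have h := HasFDerivAt.comp (g := U) (f := fun e : ℝ => (e, x)) τ (hUd τ hτ x) (hasFDerivAt_prodMk_left (𝕜 := ℝ) τ x)
    have h' := h.hasDerivAt
    have := (heq τ x hτ).unique h'
    simpa using this
  have cU : ContinuousOn U (Ioo a b ×ˢ univ) := hU.continuousOn
  have cdU : ContinuousOn (fderiv ℝ U) (Ioo a b ×ˢ univ) :=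
    hU.continuousOn_fderiv_of_isOpen hO (by exact_mod_cast le_top)
  have cg : ContinuousOn (fun p : ℝ × ES n => fderiv ℝ (u p.1) p.2) (Ioo a b ×ˢ univ) := by
    refine (cdU.clm_comp (continuousOn_const (c := ContinuousLinearMap.inr ℝ ℝ (ES n)))).congr ?_
    rintro ⟨τ, x⟩ ⟨hτ, -⟩
    exact hgrad τ hτ x
  have cl : ContinuousOn (fun p : ℝ × ES n => heatLap n (u p.1) p.2) (Ioo a b ×ˢ univ) := by
    refine (cdU.clm_apply (continuousOn_const (c := ((1 : ℝ), (0 : ES n))))).congr ?_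
    rintro ⟨τ, x⟩ ⟨hτ, -⟩
    exact hlap τ hτ x
  have cφ : ContinuousOn (fun p : ℝ × ES n => φ p.2) (Ioo a b ×ˢ univ) :=
    (hφ.continuous.comp continuous_snd).continuousOn
  have cdφ : ContinuousOn (fun p : ℝ × ES n => fderiv ℝ φ p.2) (Ioo a b ×ˢ univ) :=
    ((hφ.continuous_fderiv (by norm_num)).comp continuous_snd).continuousOn
  have iG : Integrable (fun p : ℝ × ES n => φ p.2 ^ 2 * ‖fderiv ℝ (u p.1) p.2‖ ^ 2)
      ((volume.restrict (Ioc σ t)).prod volume) :=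
    hc_prodint hσ ht (x₀ := x₀) (ρ := ρ) ((cφ.pow 2).mul (cg.norm.pow 2))
      (fun τ x hx => by simp [hz x hx])
  have iD : Integrable (fun p : ℝ × ES n => φ p.2 ^ 2 * (2 * u p.1 p.2 * heatLap n (u p.1) p.2))
      ((volume.restrict (Ioc σ t)).prod volume) :=
    hc_prodint hσ ht (x₀ := x₀) (ρ := ρ) ((cφ.pow 2).mul ((continuousOn_const.mul cU).mul cl))
      (fun τ x hx => by simp [hz x hx])
  have iP : Integrable (fun p : ℝ × ES n => ‖fderiv ℝ φ p.2‖ ^ 2 * u p.1 p.2 ^ 2)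
      ((volume.restrict (Ioc σ t)).prod volume) :=
    hc_prodint hσ ht (x₀ := x₀) (ρ := ρ) ((cdφ.norm.pow 2).mul (cU.pow 2))
      (fun τ x hx => by simp [hz' x hx])
  have jG := iG.integral_prod_left
  have jD := iD.integral_prod_left
  have jP := iP.integral_prod_left
  simp only at jG jD jP
  have hsub : ∀ τ ∈ Ioc σ t, τ ∈ Ioo a b := fun τ hτ => ⟨hσ.trans hτ.1, hτ.2.trans_lt ht⟩
  have hσ' : σ ∈ Ioo a b := ⟨hσ, hst.trans_lt ht⟩
  have ht' : t ∈ Ioo a b := ⟨hσ.trans_le hst, ht⟩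
  -- step 1
  have s1 : (∫ τ in Set.Ioo s t, ∫ x in Metric.ball x₀ r, ‖gradient (u τ) x‖ ^ 2) ≤
      ∫ τ in Ioc σ t, ∫ x, φ x ^ 2 * ‖fderiv ℝ (u τ) x‖ ^ 2 := by
    have hss : Ioo s t ⊆ Ioc σ t := fun τ hτ => ⟨hs.trans_lt hτ.1, hτ.2.le⟩
    calc _ ≤ ∫ τ in Ioo s t, ∫ x, φ x ^ 2 * ‖fderiv ℝ (u τ) x‖ ^ 2 := by
          refine integral_mono_of_nonneg (Filter.Eventually.of_forall fun τ => ?_)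
            (IntegrableOn.mono_set (show IntegrableOn _ (Ioc σ t) volume from jG) hss) ?_
          · exact integral_nonneg fun x => by positivity
          · refine (ae_restrict_iff' measurableSet_Ioo).2 (Filter.Eventually.of_forall fun τ hτ => ?_)
            have hτ' := hsub τ (hss hτ)
            have i : Integrable (fun x => φ x ^ 2 * ‖fderiv ℝ (u τ) x‖ ^ 2) := by
              have c1 := (hslice τ hτ').continuous_fderiv (by norm_num)
              have c2 := hφ.continuous
              exact hc_int (x₀ := x₀) (ρ := ρ) (by fun_prop) (fun x hx => by simp [hz x hx])
            calc (∫ x in ball x₀ r, ‖gradient (u τ) x‖ ^ 2)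
                = ∫ x in ball x₀ r, φ x ^ 2 * ‖fderiv ℝ (u τ) x‖ ^ 2 := by
                  refine setIntegral_congr_fun measurableSet_ball fun x hx => ?_
                  simp only [hone x hx, hc_norm_grad, one_pow, one_mul]
              _ ≤ _ := setIntegral_le_integral i (Filter.Eventually.of_forall fun x => by
                  show 0 ≤ φ x ^ 2 * ‖fderiv ℝ (u τ) x‖ ^ 2
                  positivity)
      _ ≤ _ := by
          refine setIntegral_mono_set jG (Filter.Eventually.of_forall fun τ => ?_) hss.eventuallyLE
          exact integral_nonneg fun x => by positivity
  -- step 2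
  have s2 : ∫ τ in Ioc σ t, ∫ x, φ x ^ 2 * ‖fderiv ℝ (u τ) x‖ ^ 2 ≤
      - (∫ τ in Ioc σ t, ∫ x, φ x ^ 2 * (2 * u τ x * heatLap n (u τ) x)) +
      4 * ∫ τ in Ioc σ t, ∫ x, ‖fderiv ℝ φ x‖ ^ 2 * u τ x ^ 2 := by
    have jN : Integrable (fun τ => -∫ x, φ x ^ 2 * (2 * u τ x * heatLap n (u τ) x))
      (volume.restrict (Ioc σ t)) := jD.neg
    rw [← integral_neg, ← integral_const_mul, ← integral_add jN (jP.const_mul 4)]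
    refine setIntegral_mono_on jG (jN.add (jP.const_mul 4)) measurableSet_Ioc fun τ hτ => ?_
    exact hc_space n (u τ) φ (hslice τ (hsub τ hτ)) hφ x₀ ρ hz hz'
  have iu : ∀ τ ∈ Ioo a b, Integrable (fun x => φ x ^ 2 * u τ x ^ 2) := fun τ hτ => by
    have c1 := (hslice τ hτ).continuous
    have c2 := hφ.continuous
    exact hc_int (x₀ := x₀) (ρ := ρ) (by fun_prop) (fun x hx => by simp [hz x hx])
  have iub : ∀ τ ∈ Ioo a b, IntegrableOn (fun x => u τ x ^ 2) (ball x₀ ρ) := fun τ hτ => by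
    have c1 := (hslice τ hτ).continuous
    have c2 : Continuous (fun x => u τ x ^ 2) := by fun_prop
    exact (c2.continuousOn.integrableOn_compact (isCompact_closedBall x₀ ρ)).mono_set
      ball_subset_closedBall
  -- step 3
  have s3 : ∫ τ in Ioc σ t, ∫ x, φ x ^ 2 * (2 * u τ x * heatLap n (u τ) x) =
      (∫ x, φ x ^ 2 * u t x ^ 2) - ∫ x, φ x ^ 2 * u σ x ^ 2 := by
    rw [integral_integral_swap iD, ← integral_sub (iu t ht') (iu σ hσ')]
    congr 1
    ext x
    rw [integral_const_mul, ← mul_sub, ← intervalIntegral.integral_of_le hst]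
    congr 1
    refine intervalIntegral.integral_eq_sub_of_hasDerivAt (f := fun τ => u τ x ^ 2) ?_ ?_
    · intro τ hτ
      rw [uIcc_of_le hst] at hτ
      have := (heq τ x ⟨hσ.trans_le hτ.1, hτ.2.trans_lt ht⟩).pow 2
      simp only [Nat.cast_ofNat, Nat.add_one_sub_one, pow_one] at this
      exact this
    · apply ContinuousOn.intervalIntegrable
      rw [uIcc_of_le hst]
      exact ((continuousOn_const.mul cU).mul cl).comp
        (f := fun τ : ℝ => (τ, x)) (by fun_prop) (fun τ hτ => ⟨⟨hσ.trans_le hτ.1, hτ.2.trans_lt ht⟩, mem_univ _⟩)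
  -- step 4
  have s4 : ∫ x, φ x ^ 2 * u σ x ^ 2 ≤ ∫ x in ball x₀ ρ, (u σ x) ^ 2 := by
    rw [← integral_indicator measurableSet_ball]
    refine integral_mono (iu σ hσ') ((iub σ hσ').integrable_indicator measurableSet_ball) fun x => ?_
    by_cases hx : x ∈ ball x₀ ρ
    · simp only [indicator_of_mem hx]
      exact mul_le_of_le_one_left (sq_nonneg _) (pow_le_one₀ (h0 x) (h1 x))
    · simp [indicator_of_notMem hx, hz x hx]
  have s5 : ∫ τ in Ioc σ t, ∫ x, ‖fderiv ℝ φ x‖ ^ 2 * u τ x ^ 2 ≤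
      M * ∫ τ in Ioo a b, ∫ x in ball x₀ ρ, (u τ x) ^ 2 := by
    have hss : Ioc σ t ⊆ Ioo a b := hsub
    calc _ ≤ ∫ τ in Ioc σ t, M * ∫ x in ball x₀ ρ, (u τ x) ^ 2 := by
          refine setIntegral_mono_on jP ((hF.mono_set hss).const_mul M) measurableSet_Ioc
            fun τ hτ => ?_
          rw [← integral_const_mul, ← integral_indicator measurableSet_ball]
          refine integral_mono ?_
            (IntegrableOn.integrable_indicator (Integrable.const_mul (iub τ (hsub τ hτ)) M) measurableSet_ball) fun x => ?_
          · have c1 := (hslice τ (hsub τ hτ)).continuous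
            have c2 := hφ.continuous_fderiv (by norm_num)
            exact hc_int (x₀ := x₀) (ρ := ρ) (by fun_prop) (fun x hx => by simp [hz' x hx])
          by_cases hx : x ∈ ball x₀ ρ
          · simp only [indicator_of_mem hx]
            exact mul_le_mul_of_nonneg_right (hφM x) (sq_nonneg _)
          · simp [indicator_of_notMem hx, hz' x hx]
      _ = M * ∫ τ in Ioc σ t, ∫ x in ball x₀ ρ, (u τ x) ^ 2 := integral_const_mul _ _
      _ ≤ _ := by
          refine mul_le_mul_of_nonneg_left ?_ hM
          refine setIntegral_mono_set hF (Filter.Eventually.of_forall fun τ => ?_) hss.eventuallyLE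
          exact integral_nonneg fun x => sq_nonneg _
  have s6 : 0 ≤ ∫ x, φ x ^ 2 * u t x ^ 2 := integral_nonneg fun x => by positivity
  linarith

/-- **Caccioppoli inequality for the heat equation.** There is `c(n) > 0` such that for any
smooth solution `u` of the heat equation on `(a,b) × ℝⁿ`, any `a < s ≤ t < b`, `x₀ ∈ ℝⁿ` and
`0 < r < ρ`,
`∫ₛᵗ ∫_{B(x₀,r)} |∇u|² ≤ c(n) (1/(ρ-r)² + 1/(s-a)) ∫ₐᵇ ∫_{B(x₀,ρ)} |u|²`
whenever the right-hand side is finite. -/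
theorem heat_caccioppoli (n : ℕ) :
    ∃ c : ℝ, 0 < c ∧
      ∀ (a b s t : ℝ) (u : ℝ → ES n → ℝ), a < s → s ≤ t → t < b →
        ContDiffOn ℝ (⊤ : ℕ∞) (fun p : ℝ × ES n => u p.1 p.2) (Set.Ioo a b ×ˢ Set.univ) →
        (∀ (τ : ℝ) (x : ES n), τ ∈ Set.Ioo a b →
          HasDerivAt (fun σ => u σ x) (heatLap n (u τ) x) τ) →
        ∀ (x₀ : ES n) (r ρ : ℝ), 0 < r → r < ρ →
          IntegrableOn (fun p : ℝ × ES n => (u p.1 p.2) ^ 2)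
            (Set.Ioo a b ×ˢ Metric.ball x₀ ρ) →
          (∫ τ in Set.Ioo s t, ∫ x in Metric.ball x₀ r, ‖gradient (u τ) x‖ ^ 2) ≤
            c * (1 / (ρ - r) ^ 2 + 1 / (s - a)) *
              ∫ τ in Set.Ioo a b, ∫ x in Metric.ball x₀ ρ, (u τ x) ^ 2 := by
  obtain ⟨C, hC, hcut⟩ := hc_cutoff n
  refine ⟨1 + 4 * C, by positivity, ?_⟩
  intro a b s t u has hst htb hU heq x₀ r ρ hr hρ hint
  obtain ⟨φ, hφ, h0, h1, hone, hz, hz', hM⟩ := hcut x₀ r ρ hr hρ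
  have hF : IntegrableOn (fun τ => ∫ x in ball x₀ ρ, (u τ x) ^ 2) (Ioo a b) := by
    rw [IntegrableOn, Measure.volume_eq_prod, ← Measure.prod_restrict] at hint
    exact hint.integral_prod_left
  have hsub : Ioo a s ⊆ Ioo a b := Ioo_subset_Ioo_right (hst.trans htb.le)
  have hsa : 0 < s - a := by linarith
  obtain ⟨σ, hσ, hle⟩ := exists_le_setAverage (μ := (volume : Measure ℝ)) (s := Ioo a s)
    (by simp [has]) (by simp) (hF.mono_set hsub)
  have h := hc_energy n a b σ t u hσ.1 (hσ.2.le.trans hst) htb hU heq x₀ r ρ (C / (ρ - r) ^ 2) hρ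
    (by positivity) φ hφ h0 h1 hone hz hz' hM s hσ.2.le hF
  have hF0 : 0 ≤ ∫ τ in Ioo a b, ∫ x in ball x₀ ρ, (u τ x) ^ 2 :=
    integral_nonneg fun τ => integral_nonneg fun x => sq_nonneg _
  have hle2 : (∫ x in ball x₀ ρ, (u σ x) ^ 2) ≤
      1 / (s - a) * ∫ τ in Ioo a b, ∫ x in ball x₀ ρ, (u τ x) ^ 2 := by
    refine hle.trans ?_
    rw [setAverage_eq, Real.volume_real_Ioo_of_le has.le, smul_eq_mul, one_div]
    refine mul_le_mul_of_nonneg_left ?_ (by positivity)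
    refine setIntegral_mono_set hF (Filter.Eventually.of_forall fun τ => ?_) hsub.eventuallyLE
    exact integral_nonneg fun x => sq_nonneg _
  generalize (∫ τ in Ioo a b, ∫ x in ball x₀ ρ, (u τ x) ^ 2) = I at *
  have p1 : 0 ≤ 1 / (ρ - r) ^ 2 * I := by positivity
  have p2 : 0 ≤ C * (1 / (s - a) * I) := by positivity
  have e : 4 * (C / (ρ - r) ^ 2) * I = 4 * C * (1 / (ρ - r) ^ 2 * I) := by ring
  rw [e] at h
  nlinarith


end
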